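/- (Berkovich–Grizzell) Let (L, m, x, y, z, r, R, ρ) be any octuple of positive integers. In the ring of formal power series over ℚ in one variable q, write a(n) for the coefficients of (∏_{j=0}^{L−1} (1 − q^{x+jm})(1 − q^{y+jm})(1 − q^{z+jm})(1 − q^{rx+Ry+ρz+jm}))⁻¹ − (∏_{j=0}^{L−1} (1 − q^{rx+jm})(1 − q^{Ry+jm})(1 − q^{ρz+jm})(1 − q^{x+y+z+jm}))⁻¹ = Σ_{n≥0} a(n) q^n. Then a(n) ≥ 0 for all n ≥ 0. -/

import Mathlib

open PowerSeries

/-!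
The coefficients `B a` of `1 / (u; q^m)_L = ∑ B a * u ^ a` are complete homogeneous symmetric
functions of `1, q^m, …, q^((L-1)m)`. In the coefficientwise order on power series they are
nonnegative, increasing and strongly log-concave. Put `uₛ = q^(xₛ)` and compare the two products
monomial by monomial in the `uₛ`. For a fixed exponent vector `p` the subtracted product contributes
`B d * ∏ B (aₛ)` for each `d` and `a` with `rₛ * aₛ + d = pₛ`, and the other product contributes
`B k * ∏ B (pₛ - rₛ * k)` for each `k` with `rₛ * k ≤ pₛ`.

Write `μ d` for the smallest entry `aₛ` belonging to `d`. The term of `d` is at most the term of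
`k = min d (μ d)`, but `d` and `μ d` compete for `k = μ d` when `μ d < d` and both occur. Then `d`
is moved to `k = μ d + h` for a small `h`: by log-concavity and rearrangement the two terms together
are still dominated by those of `μ d` and `μ d + h`. All values of `d` agree modulo `max rₛ`, so few
of them are in the way and a greedy choice of the shifts `h` is injective.
-/

namespace BerkovichGrizzell

open Finset

section GreedyChoice

theorem exists_injOn_mem_of_card_conflicts_lt {ι α : Type*} [LinearOrder ι] [DecidableEq α]
    [Nonempty α] (D : Finset ι) (t : ι → Finset α)
    (ht : ∀ i ∈ D, #{j ∈ D | j < i ∧ ¬ Disjoint (t j) (t i)} < #(t i)) :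
    ∃ φ : ι → α, Set.InjOn φ D ∧ ∀ i ∈ D, φ i ∈ t i := by
  induction D using Finset.induction_on_max with
  | empty => exact ⟨fun _ ↦ Classical.arbitrary α, by simp⟩
  | insert i D hmax ih =>
    have hiD : i ∉ D := fun h ↦ lt_irrefl _ (hmax i h)
    obtain ⟨φ, hinj, hmem⟩ := ih fun j hj ↦
      (card_le_card (filter_subset_filter _ (subset_insert i D))).trans_lt
        (ht j (mem_insert_of_mem hj))
    have hcard : #(({j ∈ insert i D | j < i ∧ ¬ Disjoint (t j) (t i)}).image φ) < #(t i) :=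
      card_image_le.trans_lt (ht i (mem_insert_self i D))
    obtain ⟨v, hvt, hv⟩ := exists_mem_notMem_of_card_lt_card hcard
    have hfresh : ∀ j ∈ D, φ j ≠ v := by
      rintro j hj rfl
      exact hv (mem_image_of_mem φ (mem_filter.2 ⟨mem_insert_of_mem hj, hmax j hj,
        not_disjoint_iff.2 ⟨φ j, hmem j hj, hvt⟩⟩))
    have hupd : Set.EqOn φ (Function.update φ i v) D := fun j hj ↦
      (Function.update_of_ne (hmax j hj).ne v φ).symm
    refine ⟨Function.update φ i v, ?_, ?_⟩
    · rw [coe_insert, Set.injOn_insert (by simpa using hiD), ← hupd.image_eq,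
        Function.update_self]
      exact ⟨hinj.congr hupd, fun ⟨j, hj, hjv⟩ ↦ hfresh j hj hjv⟩
    · rw [forall_mem_insert, Function.update_self]
      exact ⟨hvt, fun j hj ↦ hupd hj ▸ hmem j hj⟩

end GreedyChoice

section Slots

variable {μ : ℕ → ℕ} {D : Finset ℕ} {N : ℕ}

/-- The values among which `d ∈ D` is to be matched: `d` itself if `d ≤ μ d`, otherwise `μ d` if
`μ d ∉ D`, and otherwise a range of values from `μ d` on that is long enough to avoid every conflict
when `D` lies in one residue class modulo `N`. -/
def slots (μ : ℕ → ℕ) (D : Finset ℕ) (N d : ℕ) : Finset ℕ :=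
  if d ≤ μ d then {d}
  else if μ d ∈ D then Icc (μ d) (μ d + (d - μ d) / N)
  else {μ d}

theorem slots_of_le {d : ℕ} (h : d ≤ μ d) : slots μ D N d = {d} := if_pos h

theorem slots_of_lt_of_mem {d : ℕ} (h : μ d < d) (hD : μ d ∈ D) :
    slots μ D N d = Icc (μ d) (μ d + (d - μ d) / N) := by
  rw [slots, if_neg h.not_ge, if_pos hD]

theorem slots_of_lt_of_notMem {d : ℕ} (h : μ d < d) (hD : μ d ∉ D) :
    slots μ D N d = {μ d} := by
  rw [slots, if_neg h.not_ge, if_neg hD]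

theorem exists_eq_min_add_of_mem_slots {d v : ℕ} (hv : v ∈ slots μ D N d) :
    ∃ h, v = min d (μ d) + h ∧ min d (μ d) + N * h ≤ d := by
  rcases le_or_gt d (μ d) with hlow | hhigh
  · rw [slots_of_le hlow, mem_singleton] at hv
    exact ⟨0, by simp [hv, hlow]⟩
  rw [min_eq_right hhigh.le]
  by_cases hD : μ d ∈ D
  · rw [slots_of_lt_of_mem hhigh hD, mem_Icc] at hv
    refine ⟨v - μ d, by omega, ?_⟩
    have := (Nat.mul_le_mul_left N (Nat.sub_le_iff_le_add'.2 hv.2)).trans (Nat.mul_div_le _ _)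
    omega
  · rw [slots_of_lt_of_notMem hhigh hD, mem_singleton] at hv
    exact ⟨0, by simp [hv, hhigh.le]⟩

theorem le_of_mem_slots_of_lt {d v : ℕ} (h : μ d < d) (hv : v ∈ slots μ D N d) : μ d ≤ v := by
  obtain ⟨e, rfl, -⟩ := exists_eq_min_add_of_mem_slots hv
  rw [min_eq_right h.le]
  exact Nat.le_add_right _ _

theorem card_filter_modEq_Ico_le {a d : ℕ} (hmod : ∀ e ∈ D, e ≡ d [MOD N]) :
    #{e ∈ D | a ≤ e ∧ e < d} ≤ (d - a) / N := by
  have hk : ∀ e ∈ D, e < d → d = e + N * ((d - e) / N) := fun e he hed ↦ by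
    rw [Nat.mul_div_cancel' ((Nat.modEq_iff_dvd' hed.le).1 (hmod e he))]
    omega
  calc #{e ∈ D | a ≤ e ∧ e < d}
      ≤ #(Icc 1 ((d - a) / N)) := by
        refine card_le_card_of_injOn (fun e ↦ (d - e) / N) (fun e he ↦ ?_)
          fun e he e' he' hee' ↦ ?_
        · obtain ⟨he, hae, hed⟩ := mem_filter.1 he
          have hpos : 0 < N * ((d - e) / N) := by have := hk e he hed; omega
          exact mem_Icc.2 ⟨Nat.pos_of_mul_pos_left hpos, Nat.div_le_div_right (by omega)⟩
        · obtain ⟨he, -, hed⟩ := mem_filter.1 he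
          obtain ⟨he', -, hed'⟩ := mem_filter.1 he'
          have h := hk e he hed
          have h' := hk e' he' hed'
          simp only at hee'
          rw [hee'] at h
          omega
    _ = (d - a) / N := by simp

theorem card_slots_conflicts_lt (hμ : StrictAntiOn μ D) {d : ℕ} (hd : d ∈ D)
    (hmod : ∀ e ∈ D, e ≡ d [MOD N]) :
    #{e ∈ D | e < d ∧ ¬ Disjoint (slots μ D N e) (slots μ D N d)} < #(slots μ D N d) := by
  rcases le_or_gt d (μ d) with hlow | hhigh
  · have hdisj : ∀ e ∈ D, e < d → Disjoint (slots μ D N e) (slots μ D N d) := fun e he hed ↦ by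
      rw [slots_of_le hlow, slots_of_le (hed.le.trans (hlow.trans (hμ he hd hed).le))]
      simpa using hed.ne
    rw [filter_eq_empty_iff.2 fun e he h ↦ h.2 (hdisj e he h.1), slots_of_le hlow]
    simp
  by_cases hmem : μ d ∈ D
  · have hsub : ({e ∈ D | e < d ∧ ¬ Disjoint (slots μ D N e) (slots μ D N d)} : Finset ℕ) ⊆
        {e ∈ D | μ d ≤ e ∧ e < d} := by
      refine fun e he ↦ ?_
      obtain ⟨he, hed, hmeet⟩ := mem_filter.1 he
      refine mem_filter.2 ⟨he, ?_, hed⟩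
      rcases le_or_gt e (μ e) with hle | hlt
      · obtain ⟨v, hve, hvd⟩ := not_disjoint_iff.1 hmeet
        rw [slots_of_le hle, mem_singleton] at hve
        exact hve ▸ le_of_mem_slots_of_lt hhigh hvd
      · exact ((hμ he hd hed).trans hlt).le
    calc _ ≤ #{e ∈ D | μ d ≤ e ∧ e < d} := card_le_card hsub
      _ ≤ (d - μ d) / N := card_filter_modEq_Ico_le hmod
      _ < #(slots μ D N d) := by
        rw [slots_of_lt_of_mem hhigh hmem, Nat.card_Icc]
        omega
  · have hdisj : ∀ e ∈ D, e < d → Disjoint (slots μ D N e) (slots μ D N d) := fun e he hed ↦ by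
      rw [slots_of_lt_of_notMem hhigh hmem, disjoint_singleton_right]
      intro hv
      rcases le_or_gt e (μ e) with hle | hlt
      · rw [slots_of_le hle, mem_singleton] at hv
        exact hmem (hv ▸ he)
      · exact (hμ he hd hed).not_ge (le_of_mem_slots_of_lt hlt hv)
    rw [filter_eq_empty_iff.2 fun e he h ↦ h.2 (hdisj e he h.1), slots_of_lt_of_notMem hhigh hmem]
    simp

theorem exists_injOn_mem_slots (hμ : StrictAntiOn μ D)
    (hmod : ∀ d ∈ D, ∀ e ∈ D, d ≡ e [MOD N]) :
    ∃ φ : ℕ → ℕ, Set.InjOn φ D ∧ ∀ d ∈ D, φ d ∈ slots μ D N d :=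
  exists_injOn_mem_of_card_conflicts_lt D (slots μ D N) fun d hd ↦
    card_slots_conflicts_lt hμ hd fun e he ↦ hmod e he d hd

end Slots

section Pairing

variable {A : Type*} [AddCommGroup A] [PartialOrder A] [IsOrderedAddMonoid A]

theorem sum_nonneg_of_injOn_pairing {α : Type*} [DecidableEq α] {C D : Finset α} {g : α → A}
    {μ : α → α} (hCD : C ⊆ D) (hinj : Set.InjOn μ C) (hmaps : ∀ d ∈ C, μ d ∈ D \ C)
    (hpair : ∀ d ∈ C, 0 ≤ g d + g (μ d)) (hsingle : ∀ d ∈ D \ C, 0 ≤ g d) :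
    0 ≤ ∑ d ∈ D, g d :=
  calc 0 ≤ ∑ d ∈ C, (g d + g (μ d)) := sum_nonneg hpair
    _ = ∑ d ∈ C.image μ, g d + ∑ d ∈ C, g d := by rw [sum_add_distrib, sum_image hinj, add_comm]
    _ ≤ ∑ d ∈ D \ C, g d + ∑ d ∈ C, g d := by
      gcongr ?_ + _
      exact sum_le_sum_of_subset_of_nonneg (image_subset_iff.2 hmaps) fun d hd _ ↦ hsingle d hd
    _ = ∑ d ∈ D, g d := sum_sdiff hCD

theorem sum_le_sum_of_slots {μ : ℕ → ℕ} {D K : Finset ℕ} {N : ℕ} {P T : ℕ → A}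
    (hμ : StrictAntiOn μ D) (hmod : ∀ d ∈ D, ∀ e ∈ D, d ≡ e [MOD N])
    (hslots : ∀ d ∈ D, slots μ D N d ⊆ K) (hT : ∀ k ∈ K, 0 ≤ T k)
    (hmin : ∀ d ∈ D, P d ≤ T (min d (μ d)))
    (hpair : ∀ d ∈ D, μ d < d → μ d ∈ D → ∀ v ∈ slots μ D N d,
      P d + P (μ d) ≤ T v + T (μ d)) :
    ∑ d ∈ D, P d ≤ ∑ k ∈ K, T k := by
  obtain ⟨φ, hφinj, hφ⟩ := exists_injOn_mem_slots hμ hmod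
  have hφK : D.image φ ⊆ K := image_subset_iff.2 fun d hd ↦ hslots d hd (hφ d hd)
  have hφlow : ∀ d ∈ D, d ≤ μ d → φ d = d := fun d hd hle ↦
    mem_singleton.1 (slots_of_le (D := D) (N := N) hle ▸ hφ d hd)
  suffices 0 ≤ ∑ d ∈ D, (T (φ d) - P d) by
    rw [sum_sub_distrib, sub_nonneg] at this
    calc ∑ d ∈ D, P d ≤ ∑ d ∈ D, T (φ d) := this
      _ = ∑ k ∈ D.image φ, T k := (sum_image hφinj).symm
      _ ≤ ∑ k ∈ K, T k := sum_le_sum_of_subset_of_nonneg hφK fun k hk _ ↦ hT k hk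
  have hC : ∀ {d}, d ∈ ({d ∈ D | μ d < d ∧ μ d ∈ D} : Finset ℕ) → μ d < μ (μ d) := fun hd ↦ by
    obtain ⟨hd, hlt, hmem⟩ := mem_filter.1 hd
    exact hμ hmem hd hlt
  refine sum_nonneg_of_injOn_pairing (C := {d ∈ D | μ d < d ∧ μ d ∈ D}) (μ := μ)
    (filter_subset _ _) (hμ.injOn.mono fun d hd ↦ (mem_filter.1 hd).1) (fun d hd ↦ ?_)
    (fun d hd ↦ ?_) fun d hd ↦ ?_
  · have := hC hd
    simp only [mem_sdiff, mem_filter] at hd ⊢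
    exact ⟨hd.2.2, fun h ↦ h.2.1.not_gt this⟩
  · have hlow := hC hd
    obtain ⟨hd, hlt, hmem⟩ := mem_filter.1 hd
    rw [hφlow _ hmem hlow.le, sub_add_sub_comm, sub_nonneg]
    exact hpair d hd hlt hmem _ (hφ d hd)
  · obtain ⟨hd, hdC⟩ := mem_sdiff.1 hd
    rw [sub_nonneg]
    rcases le_or_gt d (μ d) with hle | hlt
    · simpa [hφlow d hd hle, hle] using hmin d hd
    · have hmem : μ d ∉ D := fun h ↦ hdC (mem_filter.2 ⟨hd, hlt, h⟩)
      have := hφ d hd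
      rw [slots_of_lt_of_notMem hlt hmem, mem_singleton] at this
      simpa [this, hlt.le] using hmin d hd

end Pairing

section Sequences

variable {A : Type*} [CommRing A]

/-- Strong log-concavity: `f (a + e) / f a` decreases in `a`, written without division. -/
def LogConcaveSeq [LE A] (f : ℕ → A) : Prop :=
  ∀ ⦃a b : ℕ⦄, a ≤ b → ∀ e, f a * f (b + e) ≤ f (a + e) * f b

/-- The convolution `∑ᵢ cⁱ * f (n - i)` of `f` with a geometric sequence; on generating functions
it is division by `1 - c * u`. -/
def geomConv (c : A) (f : ℕ → A) : ℕ → A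
  | 0 => f 0
  | n + 1 => f (n + 1) + c * geomConv c f n

/-- The complete homogeneous symmetric polynomials `hₙ(w 0, …, w (L - 1))`, as a sequence in `n`:
the coefficients of `∏ j < L, 1 / (1 - w j * u)`. -/
def completeHomogeneous (w : ℕ → A) : ℕ → ℕ → A
  | 0 => Pi.single 0 1
  | L + 1 => geomConv (w L) (completeHomogeneous w L)

theorem logConcaveSeq_single_zero_one [Preorder A] : LogConcaveSeq (Pi.single 0 1 : ℕ → A) := by
  intro a b _ e
  rcases Nat.eq_zero_or_pos e with rfl | he
  · rfl
  · simp [Pi.single_apply, he.ne']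

variable [PartialOrder A] [IsOrderedRing A] {c : A} {f : ℕ → A}

theorem geomConv_nonneg (hc : 0 ≤ c) (hf : ∀ n, 0 ≤ f n) : ∀ n, 0 ≤ geomConv c f n
  | 0 => hf 0
  | n + 1 => add_nonneg (hf _) (mul_nonneg hc (geomConv_nonneg hc hf n))

theorem le_geomConv (hc : 0 ≤ c) (hf : ∀ n, 0 ≤ f n) : ∀ n, f n ≤ geomConv c f n
  | 0 => le_rfl
  | n + 1 => le_add_of_nonneg_right (mul_nonneg hc (geomConv_nonneg hc hf n))

theorem monotone_geomConv_one (hf : ∀ n, 0 ≤ f n) : Monotone (geomConv 1 f) :=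
  monotone_nat_of_le_succ fun n ↦ by
    rw [geomConv, one_mul]
    exact le_add_of_nonneg_left (hf _)

theorem monotone_geomConv (hc : 0 ≤ c) (hf : ∀ n, 0 ≤ f n) (hmono : Monotone f) :
    Monotone (geomConv c f) := by
  refine monotone_nat_of_le_succ fun n ↦ ?_
  induction n with
  | zero => exact (hmono (Nat.le_succ 0)).trans (le_geomConv hc hf 1)
  | succ n ih => exact add_le_add (hmono (Nat.le_succ _)) (mul_le_mul_of_nonneg_left ih hc)

theorem geomConv_mul_le_of_logConcaveSeq (hlc : LogConcaveSeq f) (hc : 0 ≤ c)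
    (hf : ∀ n, 0 ≤ f n) {a b : ℕ} (hab : a ≤ b) (e : ℕ) :
    geomConv c f a * f (b + e) ≤ f (a + e) * geomConv c f b := by
  induction a generalizing b e with
  | zero => exact (hlc hab e).trans (mul_le_mul_of_nonneg_left (le_geomConv hc hf b) (hf _))
  | succ a ih =>
    obtain ⟨b, rfl⟩ := Nat.exists_eq_add_one_of_ne_zero (Nat.ne_zero_of_lt hab)
    have hswap : f (b + 1 + e) = f (b + (e + 1)) ∧ f (a + 1 + e) = f (a + (e + 1)) := by
      grind
    calc geomConv c f (a + 1) * f (b + 1 + e)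
        = f (a + 1) * f (b + 1 + e) + c * (geomConv c f a * f (b + (e + 1))) := by
          rw [geomConv, ← hswap.1]; ring
      _ ≤ f (a + 1 + e) * f (b + 1) + c * (f (a + (e + 1)) * geomConv c f b) :=
          add_le_add (hlc hab e)
            (mul_le_mul_of_nonneg_left (ih (Nat.le_of_succ_le_succ hab) (e + 1)) hc)
      _ = f (a + 1 + e) * geomConv c f (b + 1) := by
          rw [geomConv, ← hswap.2]; ring

theorem logConcaveSeq_geomConv (hlc : LogConcaveSeq f) (hc : 0 ≤ c) (hf : ∀ n, 0 ≤ f n) :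
    LogConcaveSeq (geomConv c f) := by
  intro a b hab e
  induction e with
  | zero => exact le_rfl
  | succ e ih =>
    calc geomConv c f a * geomConv c f (b + (e + 1))
        = geomConv c f a * f (b + (e + 1)) + c * (geomConv c f a * geomConv c f (b + e)) := by
          rw [← add_assoc, geomConv]; ring
      _ ≤ f (a + (e + 1)) * geomConv c f b + c * (geomConv c f (a + e) * geomConv c f b) :=
          add_le_add (geomConv_mul_le_of_logConcaveSeq hlc hc hf hab (e + 1))
            (mul_le_mul_of_nonneg_left ih hc)
      _ = geomConv c f (a + (e + 1)) * geomConv c f b := by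
          rw [← add_assoc, geomConv]; ring

variable {w : ℕ → A}

theorem completeHomogeneous_nonneg (hw : ∀ j, 0 ≤ w j) (L : ℕ) :
    ∀ n, 0 ≤ completeHomogeneous w L n := by
  induction L with
  | zero => exact fun n ↦ (Pi.single_nonneg.2 zero_le_one : (0 : ℕ → A) ≤ Pi.single 0 1) n
  | succ L ih => exact geomConv_nonneg (hw L) ih

theorem logConcaveSeq_completeHomogeneous (hw : ∀ j, 0 ≤ w j) (L : ℕ) :
    LogConcaveSeq (completeHomogeneous w L) := by
  induction L with
  | zero => exact logConcaveSeq_single_zero_one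
  | succ L ih => exact logConcaveSeq_geomConv ih (hw L) (completeHomogeneous_nonneg hw L)

theorem monotone_completeHomogeneous (hw : ∀ j, 0 ≤ w j) (hw0 : w 0 = 1) {L : ℕ} (hL : 0 < L) :
    Monotone (completeHomogeneous w L) := by
  induction L, hL using Nat.le_induction with
  | base =>
    rw [completeHomogeneous, hw0]
    exact monotone_geomConv_one (completeHomogeneous_nonneg hw 0)
  | succ L _ ih => exact monotone_geomConv (hw L) (completeHomogeneous_nonneg hw L) ih

end Sequences

section TupleWeight

theorem le_sub_mul_add {a d k h r p : ℕ} (hr : 0 < r) (hp : r * a + d = p) (hka : k ≤ a)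
    (hkd : k + r * h ≤ d) : a ≤ p - r * (k + h) := by
  obtain ⟨c, rfl⟩ := Nat.exists_eq_add_of_le hka
  have := Nat.le_mul_of_pos_left c hr
  simp only [← hp, mul_add]
  omega

theorem le_sub_mul {a d k r p : ℕ} (hr : 0 < r) (hp : r * a + d = p) (hka : k ≤ a)
    (hkd : k ≤ d) : a ≤ p - r * k :=
  le_sub_mul_add (h := 0) hr hp hka (by simpa)

variable {A ι : Type*} [CommRing A] [Fintype ι]

/-- The coefficient contributed by the exponents `a s` (for `s : ι`) and `d` to a product of
`#ι + 1` series that all have coefficients `B`. -/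
def tupleWeight (B : ℕ → A) (a : ι → ℕ) (d : ℕ) : A :=
  (∏ s, B (a s)) * B d

theorem tupleWeight_eq_mul_prod_erase [DecidableEq ι] (B : ℕ → A) (a : ι → ℕ) (d : ℕ) (t : ι) :
    tupleWeight B a d = B (a t) * B d * ∏ s ∈ univ.erase t, B (a s) := by
  rw [tupleWeight, ← mul_prod_erase univ _ (mem_univ t)]
  ring

variable [PartialOrder A] [IsOrderedRing A] {B : ℕ → A} {r p a : ι → ℕ} {d : ℕ}

theorem tupleWeight_nonneg (hB : ∀ n, 0 ≤ B n) (a : ι → ℕ) (d : ℕ) : 0 ≤ tupleWeight B a d :=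
  mul_nonneg (prod_nonneg fun _ _ ↦ hB _) (hB d)

theorem tupleWeight_le_of_le_all (hB : ∀ n, 0 ≤ B n) (hmono : Monotone B) (hr : ∀ s, 0 < r s)
    (hp : ∀ s, r s * a s + d = p s) (hd : ∀ s, d ≤ a s) :
    tupleWeight B a d ≤ tupleWeight B (fun s ↦ p s - r s * d) d := by
  refine mul_le_mul_of_nonneg_right (prod_le_prod (fun s _ ↦ hB _) fun s _ ↦ hmono ?_) (hB d)
  exact le_sub_mul (hr s) (hp s) (hd s) le_rfl

theorem tupleWeight_le_of_min_le (hB : ∀ n, 0 ≤ B n) (hmono : Monotone B) (hr : ∀ s, 0 < r s)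
    (hp : ∀ s, r s * a s + d = p s) {t : ι} (ht : ∀ s, a t ≤ a s) (htd : a t ≤ d) :
    tupleWeight B a d ≤ tupleWeight B (fun s ↦ p s - r s * a t) (a t) := by
  classical
  have hpt : p t - r t * a t = d := by rw [← hp t, Nat.add_sub_cancel_left]
  rw [tupleWeight_eq_mul_prod_erase B a d t, tupleWeight_eq_mul_prod_erase B _ (a t) t, hpt,
    mul_comm (B d)]
  refine mul_le_mul_of_nonneg_left (prod_le_prod (fun s _ ↦ hB _) fun s _ ↦ hmono ?_)
    (mul_nonneg (hB _) (hB _))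
  exact le_sub_mul (hr s) (hp s) (ht s) htd

theorem mul_le_mul_of_logConcaveSeq (hB : ∀ n, 0 ≤ B n) (hmono : Monotone B)
    (hlc : LogConcaveSeq B) {r a k d h : ℕ} (hr : 0 < r) (hka : r * a + k = r * k + d)
    (hh : k + r * h ≤ d) : B a * B k ≤ B (d - r * h) * B (k + h) := by
  have hrh : r * (k + h) ≤ r * a := by rw [mul_add]; omega
  obtain ⟨c, rfl⟩ := Nat.exists_eq_add_of_le (Nat.le_of_mul_le_mul_left hrh hr)
  have hc : c ≤ r * c := Nat.le_mul_of_pos_left c hr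
  calc B (k + h + c) * B k = B k * B (k + c + h) := by rw [mul_comm, add_right_comm]
    _ ≤ B (k + h) * B (k + c) := hlc (Nat.le_add_right k c) h
    _ ≤ B (k + h) * B (d - r * h) := by
      refine mul_le_mul_of_nonneg_left (hmono ?_) (hB _)
      simp only [mul_add] at hka
      omega
    _ = B (d - r * h) * B (k + h) := mul_comm _ _

theorem tupleWeight_add_tupleWeight_le (hB : ∀ n, 0 ≤ B n) (hmono : Monotone B)
    (hlc : LogConcaveSeq B) (hr : ∀ s, 0 < r s) (hp : ∀ s, r s * a s + d = p s) {t : ι}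
    (ht : ∀ s, a t ≤ a s) (htd : a t ≤ d) {a' : ι → ℕ} (hp' : ∀ s, r s * a' s + a t = p s)
    {h : ℕ} (hh : ∀ s, a t + r s * h ≤ d) :
    tupleWeight B a d + tupleWeight B a' (a t) ≤
      tupleWeight B (fun s ↦ p s - r s * (a t + h)) (a t + h) +
        tupleWeight B (fun s ↦ p s - r s * a t) (a t) := by
  classical
  set k := a t with hk
  have haa' : ∀ s, a s ≤ a' s := fun s ↦
    Nat.le_of_mul_le_mul_left (by have := hp s; have := hp' s; omega) (hr s)
  have hpt : p t = r t * k + d := (hp t).symm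
  have hptk : p t - r t * k = d := by omega
  have hpth : p t - r t * (k + h) = d - r t * h := by rw [hpt, mul_add]; omega
  have ha't : a' t ≤ d := hptk ▸ le_sub_mul (hr t) (hp' t) (haa' t) le_rfl
  simp only [tupleWeight_eq_mul_prod_erase B _ _ t, hptk, hpth, ← hk]
  set Q := ∏ s ∈ univ.erase t, B (a s)
  set Q' := ∏ s ∈ univ.erase t, B (a' s)
  have hQ : 0 ≤ Q := prod_nonneg fun _ _ ↦ hB _
  have hQQ' : Q ≤ Q' := prod_le_prod (fun _ _ ↦ hB _) fun s _ ↦ hmono (haa' s)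
  have hQ' : Q' ≤ ∏ s ∈ univ.erase t, B (p s - r s * k) :=
    prod_le_prod (fun _ _ ↦ hB _) fun s _ ↦ hmono <|
      le_sub_mul (hr s) (hp' s) ((ht s).trans (haa' s)) le_rfl
  have hQh : Q ≤ ∏ s ∈ univ.erase t, B (p s - r s * (k + h)) :=
    prod_le_prod (fun _ _ ↦ hB _) fun s _ ↦ hmono <|
      le_sub_mul_add (hr s) (hp s) (ht s) (hh s)
  have hBk : B (a' t) * B k ≤ B d * B k := mul_le_mul_of_nonneg_right (hmono ha't) (hB k)
  have hBh : B (a' t) * B k ≤ B (d - r t * h) * B (k + h) :=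
    mul_le_mul_of_logConcaveSeq hB hmono hlc (hr t) (by rw [hp' t, hpt]) (hh t)
  have hBB : ∀ m n, 0 ≤ B m * B n := fun m n ↦ mul_nonneg (hB m) (hB n)
  -- By rearrangement, the larger pair product `B d * B k` may be moved onto the larger `Q'`.
  calc B k * B d * Q + B (a' t) * B k * Q'
      = B (a' t) * B k * Q' + B d * B k * Q := by ring
    _ ≤ B (a' t) * B k * Q + B d * B k * Q' := mul_add_mul_le_mul_add_mul hBk hQQ'
    _ ≤ _ := add_le_add (mul_le_mul hBh hQh hQ (hBB _ _))
        (mul_le_mul_of_nonneg_left hQ' (hBB _ _))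

theorem sum_tupleWeight_le [Nonempty ι] (hB : ∀ n, 0 ≤ B n) (hmono : Monotone B)
    (hlc : LogConcaveSeq B) (hr : ∀ s, 0 < r s) {D K : Finset ℕ} {a : ℕ → ι → ℕ}
    (ha : ∀ d ∈ D, ∀ s, r s * a d s + d = p s) (hK : ∀ k, (∀ s, r s * k ≤ p s) → k ∈ K) :
    ∑ d ∈ D, tupleWeight B (a d) d ≤ ∑ k ∈ K, tupleWeight B (fun s ↦ p s - r s * k) k := by
  choose τ hτ using fun d ↦ Finite.exists_min (a d)
  obtain ⟨t, ht⟩ := Finite.exists_max r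
  have hanti : StrictAntiOn (fun d ↦ a d (τ d)) D := fun d hd e he hde ↦ by
    have hlt : a e (τ d) < a d (τ d) := by
      refine Nat.lt_of_mul_lt_mul_left (a := r (τ d)) ?_
      have := ha d hd (τ d)
      have := ha e he (τ d)
      omega
    exact (hτ e _).trans_lt hlt
  have hmod : ∀ d ∈ D, d % r t = p t % r t := fun d hd ↦ by rw [← ha d hd t, Nat.mul_add_mod]
  have hshift : ∀ {d h : ℕ}, min d (a d (τ d)) + r t * h ≤ d →
      ∀ s, min d (a d (τ d)) + r s * h ≤ d := fun hh s ↦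
    (Nat.add_le_add_left (Nat.mul_le_mul_right _ (ht s)) _).trans hh
  refine sum_le_sum_of_slots (N := r t) hanti (fun d hd e he ↦ (hmod d hd).trans (hmod e he).symm)
    (fun d hd v hv ↦ ?_) (fun k _ ↦ tupleWeight_nonneg hB _ _) (fun d hd ↦ ?_)
    fun d hd hlt hmem v hv ↦ ?_
  · obtain ⟨h, rfl, hh⟩ := exists_eq_min_add_of_mem_slots hv
    refine hK _ fun s ↦ ?_
    have := Nat.mul_le_mul_left (r s) ((min_le_right d _).trans (hτ d s))
    have := hshift hh s
    rw [mul_add, ← ha d hd s]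
    omega
  · rcases le_total d (a d (τ d)) with hle | hle
    · rw [min_eq_left hle]
      exact tupleWeight_le_of_le_all hB hmono hr (ha d hd) fun s ↦ hle.trans (hτ d s)
    · rw [min_eq_right hle]
      exact tupleWeight_le_of_min_le hB hmono hr (ha d hd) (hτ d) hle
  · obtain ⟨h, rfl, hh⟩ := exists_eq_min_add_of_mem_slots hv
    have hh := hshift hh
    rw [min_eq_right hlt.le] at hh ⊢
    exact tupleWeight_add_tupleWeight_le hB hmono hlc hr (ha d hd) (hτ d) hlt.le
      (ha _ hmem) hh

end TupleWeight

section TruncatedSeries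

variable {A ι : Type*} [CommRing A] [Fintype ι]

/-- The truncation of the series `∑ₐ B a * uᵃ` after degree `N`. -/
def truncSeries (B : ℕ → A) (u : A) (N : ℕ) : A :=
  ∑ a ∈ range (N + 1), u ^ a * B a

/-- The index set of the expanded product of `truncSeries` truncated after degree `N`: one exponent
for each `s : ι`, and one for the additional factor. -/
def tupleBox (ι : Type*) [Fintype ι] [DecidableEq ι] (N : ℕ) : Finset ((ι → ℕ) × ℕ) :=
  Fintype.piFinset (fun _ ↦ range (N + 1)) ×ˢ range (N + 1)

theorem mem_tupleBox [DecidableEq ι] {N : ℕ} {q : (ι → ℕ) × ℕ} :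
    q ∈ tupleBox ι N ↔ (∀ s, q.1 s ≤ N) ∧ q.2 ≤ N := by
  simp only [tupleBox, mem_product, Fintype.mem_piFinset, mem_range_succ_iff]

theorem prod_truncSeries_mul [DecidableEq ι] (B : ℕ → A) (v : ι → A) (w : A) (N : ℕ) :
    (∏ s, truncSeries B (v s) N) * truncSeries B w N =
      ∑ q ∈ tupleBox ι N, (∏ s, v s ^ q.1 s) * w ^ q.2 * tupleWeight B q.1 q.2 := by
  simp only [truncSeries, tupleBox, prod_univ_sum, sum_mul_sum, sum_product, prod_mul_distrib,
    tupleWeight]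
  exact sum_congr rfl fun _ _ ↦ sum_congr rfl fun _ _ ↦ mul_mul_mul_comm _ _ _ _

variable [PartialOrder A] [IsOrderedRing A] {B : ℕ → A} {r : ι → ℕ}

theorem sum_fiber_tupleWeight_le [DecidableEq ι] [Nonempty ι] (hB : ∀ n, 0 ≤ B n)
    (hmono : Monotone B) (hlc : LogConcaveSeq B) (hr : ∀ s, 0 < r s) (F : Finset ((ι → ℕ) × ℕ))
    {p : ι → ℕ} {M : ℕ} (hp : ∀ s, p s ≤ M) :
    ∑ q ∈ F with (fun s ↦ r s * q.1 s + q.2) = p, tupleWeight B q.1 q.2 ≤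
      ∑ q ∈ tupleBox ι M with (fun s ↦ q.1 s + r s * q.2) = p, tupleWeight B q.1 q.2 := by
  set F' := {q ∈ F | (fun s ↦ r s * q.1 s + q.2) = p}
  have hF' : ∀ q ∈ F', q.1 = fun s ↦ (p s - q.2) / r s := fun q hq ↦ by
    rw [← (mem_filter.1 hq).2]
    funext s
    rw [Nat.add_sub_cancel, Nat.mul_div_cancel_left _ (hr s)]
  have hinj : Set.InjOn Prod.snd (F' : Set ((ι → ℕ) × ℕ)) := fun q hq q' hq' h ↦
    Prod.ext (by rw [hF' q hq, hF' q' hq', h]) h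
  set K := {k ∈ range (M + 1) | ∀ s, r s * k ≤ p s}
  calc ∑ q ∈ F', tupleWeight B q.1 q.2
      = ∑ d ∈ F'.image Prod.snd, tupleWeight B (fun s ↦ (p s - d) / r s) d := by
        rw [sum_image hinj]
        exact sum_congr rfl fun q hq ↦ by rw [← hF' q hq]
    _ ≤ ∑ k ∈ K, tupleWeight B (fun s ↦ p s - r s * k) k := by
        refine sum_tupleWeight_le hB hmono hlc hr (fun d hd s ↦ ?_) fun k hk ↦ ?_
        · obtain ⟨q, hq, rfl⟩ := mem_image.1 hd
          rw [← congrFun (hF' q hq) s, ← (mem_filter.1 hq).2]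
        · obtain ⟨s⟩ := ‹Nonempty ι›
          have := (Nat.le_mul_of_pos_left k (hr s)).trans ((hk s).trans (hp s))
          exact mem_filter.2 ⟨mem_range_succ_iff.2 this, hk⟩
    _ = ∑ q ∈ K.image fun k ↦ (fun s ↦ p s - r s * k, k), tupleWeight B q.1 q.2 := by
        rw [sum_image fun k _ k' _ h ↦ congrArg Prod.snd h]
    _ ≤ _ := by
        refine sum_le_sum_of_subset_of_nonneg (image_subset_iff.2 fun k hk ↦ ?_)
          fun q _ _ ↦ tupleWeight_nonneg hB _ _
        obtain ⟨hkM, hk⟩ := mem_filter.1 hk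
        exact mem_filter.2 ⟨mem_tupleBox.2 ⟨fun s ↦ (Nat.sub_le _ _).trans (hp s),
          mem_range_succ_iff.1 hkM⟩, funext fun s ↦ Nat.sub_add_cancel (hk s)⟩

theorem sum_tupleBox_le [DecidableEq ι] [Nonempty ι] (hB : ∀ n, 0 ≤ B n) (hmono : Monotone B)
    (hlc : LogConcaveSeq B) (hr : ∀ s, 0 < r s) {u : ι → A} (hu : ∀ s, 0 ≤ u s) {N M : ℕ}
    (hM : ∀ s, r s * N + N ≤ M) :
    ∑ q ∈ tupleBox ι N, (∏ s, u s ^ (r s * q.1 s + q.2)) * tupleWeight B q.1 q.2 ≤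
      ∑ q ∈ tupleBox ι M, (∏ s, u s ^ (q.1 s + r s * q.2)) * tupleWeight B q.1 q.2 := by
  set exponents : Finset (ι → ℕ) := Fintype.piFinset fun _ ↦ range (M + 1)
  have hmaps : ∀ q ∈ tupleBox ι N, (fun s ↦ r s * q.1 s + q.2) ∈ exponents := fun q hq ↦ by
    obtain ⟨hq₁, hq₂⟩ := mem_tupleBox.1 hq
    exact Fintype.mem_piFinset.2 fun s ↦ mem_range_succ_iff.2 <|
      (add_le_add (Nat.mul_le_mul_left _ (hq₁ s)) hq₂).trans (hM s)
  have hfiber : ∀ N (e : (ι → ℕ) × ℕ → ι → ℕ) p,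
      ∑ q ∈ tupleBox ι N with e q = p, (∏ s, u s ^ e q s) * tupleWeight B q.1 q.2 =
        (∏ s, u s ^ p s) * ∑ q ∈ tupleBox ι N with e q = p, tupleWeight B q.1 q.2 :=
    fun N e p ↦ by
      rw [mul_sum]
      exact sum_congr rfl fun q hq ↦ by rw [(mem_filter.1 hq).2]
  have hmonomial : ∀ p : ι → ℕ, 0 ≤ ∏ s, u s ^ p s := fun p ↦
    prod_nonneg fun s _ ↦ pow_nonneg (hu s) _
  calc ∑ q ∈ tupleBox ι N, (∏ s, u s ^ (r s * q.1 s + q.2)) * tupleWeight B q.1 q.2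
      = ∑ p ∈ exponents, (∏ s, u s ^ p s) *
          ∑ q ∈ tupleBox ι N with (fun s ↦ r s * q.1 s + q.2) = p, tupleWeight B q.1 q.2 := by
        rw [← sum_fiberwise_of_maps_to hmaps]
        exact sum_congr rfl fun p _ ↦ hfiber _ _ p
    _ ≤ ∑ p ∈ exponents, (∏ s, u s ^ p s) *
          ∑ q ∈ tupleBox ι M with (fun s ↦ q.1 s + r s * q.2) = p, tupleWeight B q.1 q.2 :=
        sum_le_sum fun p hp ↦ mul_le_mul_of_nonneg_left
          (sum_fiber_tupleWeight_le hB hmono hlc hr _ fun s ↦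
            mem_range_succ_iff.1 (Fintype.mem_piFinset.1 hp s)) (hmonomial p)
    _ = ∑ p ∈ exponents, ∑ q ∈ tupleBox ι M with (fun s ↦ q.1 s + r s * q.2) = p,
          (∏ s, u s ^ (q.1 s + r s * q.2)) * tupleWeight B q.1 q.2 :=
        sum_congr rfl fun p _ ↦ (hfiber _ _ p).symm
    _ ≤ ∑ q ∈ tupleBox ι M, (∏ s, u s ^ (q.1 s + r s * q.2)) * tupleWeight B q.1 q.2 :=
        sum_fiberwise_le_sum_of_sum_fiber_nonneg fun p _ ↦ sum_nonneg fun q _ ↦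
          mul_nonneg (hmonomial _) (tupleWeight_nonneg hB _ _)

theorem prod_truncSeries_mul_le [Nonempty ι] (hB : ∀ n, 0 ≤ B n) (hmono : Monotone B)
    (hlc : LogConcaveSeq B) (hr : ∀ s, 0 < r s) {u : ι → A} (hu : ∀ s, 0 ≤ u s) {N M : ℕ}
    (hM : ∀ s, r s * N + N ≤ M) :
    (∏ s, truncSeries B (u s ^ r s) N) * truncSeries B (∏ s, u s) N ≤
      (∏ s, truncSeries B (u s) M) * truncSeries B (∏ s, u s ^ r s) M := by
  classical
  simpa only [prod_truncSeries_mul, pow_add, pow_mul, prod_mul_distrib, prod_pow]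
    using sum_tupleBox_le hB hmono hlc hr hu hM

end TruncatedSeries

section GeneratingFunction

variable {A : Type*} [CommRing A]

theorem one_sub_mul_truncSeries_geomConv (c u : A) (f : ℕ → A) (N : ℕ) :
    (1 - c * u) * truncSeries (geomConv c f) u N =
      truncSeries f u N - c * geomConv c f N * u ^ (N + 1) := by
  induction N with
  | zero =>
    simp only [truncSeries, zero_add, sum_range_one, geomConv]
    ring
  | succ N ih =>
    have hstep : ∀ g : ℕ → A,
        truncSeries g u (N + 1) = truncSeries g u N + u ^ (N + 1) * g (N + 1) := fun g ↦
      sum_range_succ _ _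
    rw [hstep, hstep, mul_add, ih, geomConv]
    ring

theorem prod_one_sub_mul_truncSeries_smodEq_one (w : ℕ → A) (u : A) (L N : ℕ) :
    (∏ j ∈ range L, (1 - w j * u)) * truncSeries (completeHomogeneous w L) u N
      ≡ 1 [SMOD Ideal.span {u ^ (N + 1)}] := by
  induction L with
  | zero => simp [truncSeries, completeHomogeneous, Pi.single_apply]
  | succ L ih =>
    refine SModEq.trans ?_ ih
    rw [prod_range_succ, mul_assoc, completeHomogeneous, one_sub_mul_truncSeries_geomConv,
      SModEq.sub_mem, Ideal.mem_span_singleton]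
    exact ⟨-(∏ j ∈ range L, (1 - w j * u)) *
      (w L * geomConv (w L) (completeHomogeneous w L) N), by ring⟩

end GeneratingFunction

section PowerSeriesOrder

variable {k : Type*}

theorem coeff_inv_eq_of_mul_smodEq_one [Field k] {P S : k⟦X⟧} {n : ℕ}
    (h : P * S ≡ 1 [SMOD Ideal.span {(X : k⟦X⟧) ^ (n + 1)}]) : coeff n P⁻¹ = coeff n S := by
  rw [SModEq.sub_mem, Ideal.mem_span_singleton] at h
  have hP : constantCoeff P ≠ 0 := fun hP ↦ by
    simpa [hP] using X_pow_dvd_iff.1 h 0 n.succ_pos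
  have hdvd : X ^ (n + 1) ∣ S - P⁻¹ := by
    have heq : S - P⁻¹ = P⁻¹ * (P * S - 1) := by
      rw [mul_sub, ← mul_assoc, PowerSeries.inv_mul_cancel P hP, one_mul, mul_one]
    exact heq ▸ h.mul_left _
  have hcoeff : coeff n (S - P⁻¹) = 0 := X_pow_dvd_iff.1 hdvd n n.lt_succ_self
  rw [map_sub, sub_eq_zero] at hcoeff
  exact hcoeff.symm

/-- The coefficientwise order on power series; Mathlib puts no order on `k⟦X⟧`. -/
noncomputable scoped instance coeffwisePartialOrder [Semiring k] [PartialOrder k] :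
    PartialOrder k⟦X⟧ :=
  PartialOrder.lift (fun f n ↦ coeff n f) fun _ _ h ↦ PowerSeries.ext (congrFun h)

theorem le_iff_coeff_le [Semiring k] [PartialOrder k] {f g : k⟦X⟧} :
    f ≤ g ↔ ∀ n, coeff n f ≤ coeff n g :=
  Iff.rfl

variable [CommRing k] [PartialOrder k] [IsOrderedRing k]

theorem X_pow_nonneg (c : ℕ) : 0 ≤ (X : k⟦X⟧) ^ c := fun n ↦ by
  simp only [map_zero, coeff_X_pow]
  split_ifs <;> simp

scoped instance : IsOrderedRing k⟦X⟧ :=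
  haveI : IsOrderedAddMonoid k⟦X⟧ :=
    { add_le_add_left := fun f g h p n ↦ by
        simpa only [map_add] using add_le_add_left (h n) _ }
  haveI : ZeroLEOneClass k⟦X⟧ := ⟨by simpa using X_pow_nonneg (k := k) 0⟩
  IsOrderedRing.of_mul_nonneg fun f g hf hg n ↦ by
    simp only [map_zero, coeff_mul]
    exact sum_nonneg fun q _ ↦ mul_nonneg (by simpa using hf q.1) (by simpa using hg q.2)

end PowerSeriesOrder

section QPochhammer

variable {k : Type*} [CommRing k] {c n N : ℕ}

/-- The finite `q`-Pochhammer product `(q^c; q^m)_L`, with the variable `q` written `X`. -/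
noncomputable def qPochhammer (k : Type*) [CommRing k] (c m L : ℕ) : k⟦X⟧ :=
  ∏ j ∈ range L, (1 - X ^ (c + j * m))

/-- The Gaussian binomial coefficient `[L + a - 1 choose a]` in base `q^m`, as a function of `a`:
the coefficient of `uᵃ` in `1 / (u; q^m)_L`. -/
noncomputable def qMultichoose (k : Type*) [CommRing k] (m L : ℕ) : ℕ → k⟦X⟧ :=
  completeHomogeneous (fun j ↦ X ^ (j * m)) L

theorem qPochhammer_mul_truncSeries_smodEq_one (m L : ℕ) (hc : 0 < c) (hn : n ≤ N) :
    qPochhammer k c m L * truncSeries (qMultichoose k m L) (X ^ c) N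
      ≡ 1 [SMOD Ideal.span {(X : k⟦X⟧) ^ (n + 1)}] := by
  have hprod : qPochhammer k c m L = ∏ j ∈ range L, (1 - X ^ (j * m) * X ^ c) := by
    simp only [qPochhammer, ← pow_add, add_comm]
  rw [hprod]
  refine (prod_one_sub_mul_truncSeries_smodEq_one _ _ L N).mono ?_
  rw [Ideal.span_singleton_le_span_singleton, ← pow_mul]
  exact pow_dvd_pow _ ((Nat.succ_le_succ hn).trans (Nat.le_mul_of_pos_left _ hc))

theorem prod_qPochhammer_mul_smodEq_one {ι : Type*} [Fintype ι] (m L : ℕ) {x : ι → ℕ}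
    (hx : ∀ s, 0 < x s) (hc : 0 < c) (hn : n ≤ N) :
    ((∏ s, qPochhammer k (x s) m L) * qPochhammer k c m L) *
      ((∏ s, truncSeries (qMultichoose k m L) (X ^ x s) N) *
        truncSeries (qMultichoose k m L) (X ^ c) N)
      ≡ 1 [SMOD Ideal.span {(X : k⟦X⟧) ^ (n + 1)}] := by
  have h := (SModEq.prod (s := univ) fun s _ ↦
    qPochhammer_mul_truncSeries_smodEq_one (k := k) m L (hx s) hn).mul
    (qPochhammer_mul_truncSeries_smodEq_one m L hc hn)
  rwa [prod_mul_distrib, prod_const_one, one_mul, mul_mul_mul_comm] at h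

variable [PartialOrder k] [IsOrderedRing k]

theorem qMultichoose_nonneg (m L a : ℕ) : 0 ≤ qMultichoose k m L a :=
  completeHomogeneous_nonneg (fun _ ↦ X_pow_nonneg _) L a

theorem monotone_qMultichoose (m : ℕ) {L : ℕ} (hL : 0 < L) : Monotone (qMultichoose k m L) :=
  monotone_completeHomogeneous (fun _ ↦ X_pow_nonneg _) (by simp) hL

theorem logConcaveSeq_qMultichoose (m L : ℕ) : LogConcaveSeq (qMultichoose k m L) :=
  logConcaveSeq_completeHomogeneous (fun _ ↦ X_pow_nonneg _) L

end QPochhammer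

end BerkovichGrizzell

open BerkovichGrizzell in
theorem berkovich_grizzell_octuple_general {ι k : Type*} [Fintype ι] [Nonempty ι] [Field k]
    [PartialOrder k] [IsOrderedRing k] (L m : ℕ) {x r : ι → ℕ} (hx : ∀ s, 0 < x s)
    (hr : ∀ s, 0 < r s) (n : ℕ) :
    0 ≤ coeff n
      (((∏ s, qPochhammer k (x s) m L) * qPochhammer k (∑ s, r s * x s) m L)⁻¹ -
        ((∏ s, qPochhammer k (r s * x s) m L) * qPochhammer k (∑ s, x s) m L)⁻¹) := by
  obtain rfl | hL := L.eq_zero_or_pos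
  · simp [qPochhammer]
  have hrx : ∀ s, 0 < r s * x s := fun s ↦ Nat.mul_pos (hr s) (hx s)
  have hM : ∀ s, r s * n + n ≤ (∑ s, r s) * n + n := fun s ↦ by
    gcongr
    exact Finset.single_le_sum (fun _ _ ↦ Nat.zero_le _) (Finset.mem_univ s)
  rw [map_sub, sub_nonneg,
    coeff_inv_eq_of_mul_smodEq_one (prod_qPochhammer_mul_smodEq_one m L hrx
      (Finset.sum_pos (fun s _ ↦ hx s) Finset.univ_nonempty) le_rfl),
    coeff_inv_eq_of_mul_smodEq_one (prod_qPochhammer_mul_smodEq_one m L hx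
      (Finset.sum_pos (fun s _ ↦ hrx s) Finset.univ_nonempty) (Nat.le_add_left n ((∑ s, r s) * n)))]
  have h := prod_truncSeries_mul_le (qMultichoose_nonneg m L) (monotone_qMultichoose m hL)
    (logConcaveSeq_qMultichoose m L) hr (u := fun s ↦ (X : k⟦X⟧) ^ x s)
    (fun s ↦ X_pow_nonneg _) hM
  simpa only [← pow_mul, mul_comm (x _), Finset.prod_pow_eq_pow_sum] using le_iff_coeff_le.1 h n

theorem berkovich_grizzell_octuple (L m x y z r R ρ : ℕ)
    (hL : 0 < L) (hm : 0 < m) (hx : 0 < x) (hy : 0 < y) (hz : 0 < z)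
    (hr : 0 < r) (hR : 0 < R) (hρ : 0 < ρ) (n : ℕ) :
    0 ≤ PowerSeries.coeff (R := ℚ) n
      ((∏ j ∈ Finset.range L,
          (1 - (PowerSeries.X : PowerSeries ℚ) ^ (x + j * m)) *
          ((1 - (PowerSeries.X : PowerSeries ℚ) ^ (y + j * m)) *
           ((1 - (PowerSeries.X : PowerSeries ℚ) ^ (z + j * m)) *
            (1 - (PowerSeries.X : PowerSeries ℚ) ^ (r * x + R * y + ρ * z + j * m)))))⁻¹ -
       (∏ j ∈ Finset.range L,
          (1 - (PowerSeries.X : PowerSeries ℚ) ^ (r * x + j * m)) *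
          ((1 - (PowerSeries.X : PowerSeries ℚ) ^ (R * y + j * m)) *
           ((1 - (PowerSeries.X : PowerSeries ℚ) ^ (ρ * z + j * m)) *
            (1 - (PowerSeries.X : PowerSeries ℚ) ^ (x + y + z + j * m)))))⁻¹) := by
  have h := berkovich_grizzell_octuple_general (k := ℚ) L m (x := ![x, y, z]) (r := ![r, R, ρ])
    (by simp [Fin.forall_fin_succ, *]) (by simp [Fin.forall_fin_succ, *]) n
  simpa [Fin.prod_univ_three, Fin.sum_univ_three, BerkovichGrizzell.qPochhammer,
    Finset.prod_mul_distrib, mul_assoc] using h
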